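/- arXiv:2210.13931 — 4 statements merged into one kernel-verified Lean document; each statement's English description precedes it below -/
import Mathlib

section
/- Let f_1,…,f_m : ℝ^d → ℝ be differentiable with each ∇f_i being L-Lipschitz continuous, and set f = (1/m)Σ_{i=1}^m f_i (so ∇f is L-Lipschitz). Let η > 0 and let x, g, s ∈ ℝ^{m×d} satisfy s̄ = ḡ, and set x̄⁺ = x̄ − η s̄. Define U = ‖(1/m)Σ_{i=1}^m (g(i) − ∇f_i(x(i)))‖² and C = ‖x − 𝟙x̄ᵀ‖² + η²‖s − 𝟙s̄ᵀ‖². Then f(x̄⁺) ≤ f(x̄) − (η/2)‖∇f(x̄)‖² + η U + (L²η/m) C − (1/(2η) − L/2)‖x̄⁺ − x̄‖². -/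
open scoped BigOperators

noncomputable section

/-- Frobenius norm of a matrix represented by its rows (Euclidean norm for vectors). -/
def fnorm {m : ℕ} {E : Type} [NormedAddCommGroup E] (u : Fin m → E) : ℝ :=
  Real.sqrt (∑ i, ‖u i‖ ^ 2)

/-- Average of the rows of a matrix: `ū = (1/m) 𝟙ᵀ u`. -/
def rowAvg {m : ℕ} {E : Type} [AddCommGroup E] [Module ℝ E] (u : Fin m → E) : E :=
  (m : ℝ)⁻¹ • ∑ i, u i

/-- Action of the gossip matrix `W` on the rows of `u`. -/
def gossipMul {m : ℕ} (W : Fin m → Fin m → ℝ) {E : Type} [AddCommGroup E] [Module ℝ E]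
    (u : Fin m → E) : Fin m → E :=
  fun i => ∑ j, W i j • u j

/-- The pair `(u^(k), u^(k-1))` of the Chebyshev-accelerated gossip recursion
`u^(k+1) = (1+η_u) W u^(k) - η_u u^(k-1)` with
`η_u = (1 - √(1-λ₂²))/(1 + √(1-λ₂²))`. -/
def fastMixPair {m : ℕ} (W : Fin m → Fin m → ℝ) (lam : ℝ) {E : Type} [AddCommGroup E]
    [Module ℝ E] (u0 : Fin m → E) : ℕ → (Fin m → E) × (Fin m → E)
  | 0 => (u0, u0)
  | K + 1 =>
      let p := fastMixPair W lam u0 K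
      let etau := (1 - Real.sqrt (1 - lam ^ 2)) / (1 + Real.sqrt (1 - lam ^ 2))
      ((1 + etau) • gossipMul W p.1 - etau • p.2, p.1)

/-- `FastMix(u⁰, K) = u^(K)`. -/
def fastMix {m : ℕ} (W : Fin m → Fin m → ℝ) (lam : ℝ) {E : Type} [AddCommGroup E]
    [Module ℝ E] (u0 : Fin m → E) (K : ℕ) : Fin m → E :=
  (fastMixPair W lam u0 K).1

lemma descent_aux {E : Type} [NormedAddCommGroup E] [InnerProductSpace ℝ E] [CompleteSpace E]
    (F : E → ℝ) (L : ℝ) (hF : Differentiable ℝ F)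
    (hL : ∀ x x' : E, ‖gradient F x - gradient F x'‖ ≤ L * ‖x - x'‖) (x v : E) :
    F (x + v) ≤ F x + inner ℝ (gradient F x) v + L / 2 * ‖v‖ ^ 2 := by
  have hd : ∀ t : ℝ, HasDerivAt
      (fun t : ℝ => F (x + t • v) - t * inner ℝ (gradient F x) v - L / 2 * ‖v‖ ^ 2 * t ^ 2)
      (inner ℝ (gradient F (x + t • v)) v - inner ℝ (gradient F x) v - L * ‖v‖ ^ 2 * t) t := by
    intro t
    have h1 : HasDerivAt (fun t : ℝ => x + t • v) v t := by
      simpa using ((hasDerivAt_id t).smul_const v).const_add x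
    have h2 := ((hF (x + t • v)).hasGradientAt.hasFDerivAt).comp_hasDerivAt t h1
    have h3 := (h2.sub ((hasDerivAt_id t).mul_const (inner ℝ (gradient F x) v))).sub
      ((hasDerivAt_pow 2 t).const_mul (L / 2 * ‖v‖ ^ 2))
    refine h3.congr_deriv ?_
    simp
    ring
  have ha := antitoneOn_of_deriv_nonpos (convex_Icc (0:ℝ) 1)
    (fun t _ => (hd t).continuousAt.continuousWithinAt)
    (fun t _ => (hd t).differentiableAt.differentiableWithinAt)
    (fun t ht => by
      rw [interior_Icc] at ht
      rw [(hd t).deriv, ← inner_sub_left]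
      have h1 := real_inner_le_norm (gradient F (x + t • v) - gradient F x) v
      have h2 := hL (x + t • v) x
      rw [add_sub_cancel_left, norm_smul, Real.norm_of_nonneg ht.1.le] at h2
      nlinarith [mul_le_mul_of_nonneg_right h2 (norm_nonneg v)])
  have := ha (Set.left_mem_Icc.2 zero_le_one) (Set.right_mem_Icc.2 zero_le_one) zero_le_one
  simp only [one_smul, zero_smul, add_zero] at this
  linarith

lemma grad_avg_aux {E : Type} [NormedAddCommGroup E] [InnerProductSpace ℝ E] [CompleteSpace E]
    {m : ℕ} (fi : Fin m → E → ℝ) (hdiff : ∀ i, Differentiable ℝ (fi i)) (f : E → ℝ)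
    (hf : ∀ x, f x = (m : ℝ)⁻¹ * ∑ i, fi i x) (x : E) :
    gradient f x = (m : ℝ)⁻¹ • ∑ i, gradient (fi i) x := by
  apply HasGradientAt.gradient
  rw [hasGradientAt_iff_hasFDerivAt, map_smul, map_sum]
  have : f = fun x => (m : ℝ)⁻¹ * ∑ i, fi i x := funext hf
  rw [this]
  exact (HasFDerivAt.fun_sum fun i _ => (hdiff i x).hasGradientAt.hasFDerivAt).const_mul _

lemma norm_avg_aux {E : Type} [NormedAddCommGroup E] [InnerProductSpace ℝ E]
    {m : ℕ} (u : Fin m → E) :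
    ‖(m : ℝ)⁻¹ • ∑ i, u i‖ ^ 2 ≤ (m : ℝ)⁻¹ * ∑ i, ‖u i‖ ^ 2 := by
  rcases Nat.eq_zero_or_pos m with rfl | hm
  · simp
  have hm' : (0:ℝ) < m := by exact_mod_cast hm
  rw [norm_smul, mul_pow, Real.norm_of_nonneg (by positivity)]
  have h1 : ‖∑ i, u i‖ ^ 2 ≤ (∑ i, ‖u i‖) ^ 2 := by
    gcongr
    exact norm_sum_le _ _
  have h2 := sq_sum_le_card_mul_sum_sq (s := Finset.univ) (f := fun i => ‖u i‖)
  simp only [Finset.card_univ, Fintype.card_fin] at h2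
  calc _ ≤ ((m:ℝ)⁻¹) ^ 2 * (m * ∑ i, ‖u i‖ ^ 2) := by gcongr; exact h1.trans h2
    _ = _ := by field_simp

theorem statement7 (m d : ℕ) (hm : 1 ≤ m) (hd : 1 ≤ d) (L η : ℝ) (hη : 0 < η)
    (fi : Fin m → EuclideanSpace ℝ (Fin d) → ℝ)
    (hdiff : ∀ i, Differentiable ℝ (fi i))
    (hL : ∀ i, ∀ x x' : EuclideanSpace ℝ (Fin d),
      ‖gradient (fi i) x - gradient (fi i) x'‖ ≤ L * ‖x - x'‖)
    (f : EuclideanSpace ℝ (Fin d) → ℝ)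
    (hf : ∀ x, f x = (m : ℝ)⁻¹ * ∑ i, fi i x)
    (x g s : Fin m → EuclideanSpace ℝ (Fin d))
    (hsg : rowAvg s = rowAvg g) :
    f (rowAvg x - η • rowAvg s) ≤ f (rowAvg x)
      - (η / 2) * ‖gradient f (rowAvg x)‖ ^ 2
      + η * ‖(m : ℝ)⁻¹ • ∑ i, (g i - gradient (fi i) (x i))‖ ^ 2
      + (L ^ 2 * η / (m : ℝ)) *
          (fnorm (x - fun _ => rowAvg x) ^ 2 + η ^ 2 * fnorm (s - fun _ => rowAvg s) ^ 2)
      - (1 / (2 * η) - L / 2) * ‖(rowAvg x - η • rowAvg s) - rowAvg x‖ ^ 2 := by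
  have hm' : (0:ℝ) < m := by exact_mod_cast hm
  have hgrad := grad_avg_aux fi hdiff f hf (rowAvg x)
  have hdesc : ∀ y v, f (y + v) ≤ f y + inner ℝ (gradient f y) v + L / 2 * ‖v‖ ^ 2 := by
    intro y v
    rw [grad_avg_aux fi hdiff f hf y, hf, hf, real_inner_smul_left, sum_inner]
    have h := Finset.sum_le_sum fun i (_ : i ∈ Finset.univ) =>
      descent_aux (fi i) L (hdiff i) (hL i) y v
    simp only [Finset.sum_add_distrib, Finset.sum_const, Finset.card_univ, Fintype.card_fin,
      nsmul_eq_mul] at h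
    have h' := mul_le_mul_of_nonneg_left h (inv_nonneg.2 hm'.le)
    have e : (m:ℝ)⁻¹ * (m * (L / 2 * ‖v‖ ^ 2)) = L / 2 * ‖v‖ ^ 2 := by field_simp
    rw [mul_add, mul_add, e] at h'
    exact h'
  have hD := hdesc (rowAvg x) (-(η • rowAvg s))
  rw [← sub_eq_add_neg, norm_neg, inner_neg_right, real_inner_smul_right, norm_smul,
    Real.norm_of_nonneg hη.le] at hD
  have hx : fnorm (x - fun _ => rowAvg x) ^ 2 = ∑ i, ‖x i - rowAvg x‖ ^ 2 := by
    unfold fnorm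
    rw [Real.sq_sqrt (Finset.sum_nonneg fun i _ => sq_nonneg _)]
    rfl
  set A := (m : ℝ)⁻¹ • ∑ i, (g i - gradient (fi i) (x i)) with hA
  set B := (m : ℝ)⁻¹ • ∑ i, (gradient (fi i) (x i) - gradient (fi i) (rowAvg x)) with hB
  have hAB : rowAvg s - gradient f (rowAvg x) = A + B := by
    rw [hsg, hgrad, hA, hB, ← smul_add, ← Finset.sum_add_distrib]
    simp [rowAvg, smul_sub]
  have hBn : ‖B‖ ^ 2 ≤ L ^ 2 / m * fnorm (x - fun _ => rowAvg x) ^ 2 := by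
    refine (norm_avg_aux _).trans ?_
    rw [hx, div_eq_inv_mul, mul_assoc, Finset.mul_sum (a := L ^ 2)]
    gcongr with i
    rw [← mul_pow]
    gcongr
    exact hL i _ _
  have hsum : ‖A + B‖ ^ 2 ≤ 2 * ‖A‖ ^ 2 + 2 * ‖B‖ ^ 2 := by
    nlinarith [norm_add_le A B, norm_nonneg (A + B), sq_nonneg (‖A‖ - ‖B‖), norm_nonneg A,
      norm_nonneg B]
  have hexp := norm_sub_sq_real (rowAvg s) (gradient f (rowAvg x))
  rw [hAB, real_inner_comm] at hexp
  have hN : ‖(rowAvg x - η • rowAvg s) - rowAvg x‖ = η * ‖rowAvg s‖ := by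
    rw [sub_sub_cancel_left, norm_neg, norm_smul, Real.norm_of_nonneg hη.le]
  rw [hN]
  have hpos : 0 ≤ (L ^ 2 * η / (m : ℝ)) * (η ^ 2 * fnorm (s - fun _ => rowAvg s) ^ 2) := by
    positivity
  have e1 : (1 / (2 * η) - L / 2) * (η * ‖rowAvg s‖) ^ 2
      = η / 2 * ‖rowAvg s‖ ^ 2 - L / 2 * (η * ‖rowAvg s‖) ^ 2 := by
    field_simp
  have e2 : (L ^ 2 * η / (m : ℝ)) * fnorm (x - fun _ => rowAvg x) ^ 2
      = η * (L ^ 2 / m * fnorm (x - fun _ => rowAvg x) ^ 2) := by ring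
  rw [e1, mul_add, e2]
  have k1 := mul_le_mul_of_nonneg_left hBn hη.le
  have k2 := mul_le_mul_of_nonneg_left hsum hη.le
  rw [hexp] at k2
  nlinarith
end
end

section
/- Let h_1,…,h_n : ℝ^d → ℝ be differentiable and L-average smooth, set H = (1/n)Σ_{j=1}^n h_j, and let b ≥ 1. Then for all g, x, x′ ∈ ℝ^d, the average over all maps ξ : {1,…,b} → {1,…,n} (i.e., over all n^b mini-batches of size b drawn uniformly with replacement) satisfies n^{−b} Σ_{ξ} ‖g + (1/b)Σ_{k=1}^b (∇h_{ξ(k)}(x′) − ∇h_{ξ(k)}(x)) − ∇H(x′)‖² ≤ ‖g − ∇H(x)‖² + (L²/b)‖x′ − x‖². -/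
open scoped BigOperators

noncomputable section

theorem aux_sum {n : ℕ} (hn : 1 ≤ n) {E : Type*} [NormedAddCommGroup E] [InnerProductSpace ℝ E]
    (u : Fin n → E) (hu : ∑ j, u j = 0) (b : ℕ) : ∀ a : E,
    ∑ ξ : Fin b → Fin n, ‖a + ∑ k, u (ξ k)‖ ^ 2
      = (n : ℝ) ^ b * (‖a‖ ^ 2 + b * ((n : ℝ)⁻¹ * ∑ j, ‖u j‖ ^ 2)) := by
  have hn0 : (n : ℝ) ≠ 0 := by positivity
  induction b with
  | zero => intro a; simp
  | succ b ih =>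
    intro a
    rw [← (Fin.consEquiv (fun _ : Fin (b+1) => Fin n)).sum_comp, Fintype.sum_prod_type]
    have h1 : ∀ j : Fin n, ∑ ξ : Fin b → Fin n,
        ‖a + ∑ k, u ((Fin.consEquiv (fun _ : Fin (b+1) => Fin n)) (j, ξ) k)‖ ^ 2
        = (n : ℝ) ^ b * (‖a‖ ^ 2 + 2 * inner ℝ a (u j) + ‖u j‖ ^ 2
            + b * ((n : ℝ)⁻¹ * ∑ j, ‖u j‖ ^ 2)) := by
      intro j
      rw [← norm_add_sq_real, ← ih (a + u j)]
      refine Finset.sum_congr rfl fun ξ _ => ?_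
      simp [Fin.consEquiv, Fin.sum_univ_succ, add_assoc]
    refine (Finset.sum_congr rfl fun j _ => h1 j).trans ?_
    rw [← Finset.mul_sum]
    simp only [Finset.sum_add_distrib, ← Finset.mul_sum, ← inner_sum, hu]
    simp
    field_simp
    ring

theorem aux_var {n : ℕ} (hn : 1 ≤ n) {E : Type*} [NormedAddCommGroup E] [InnerProductSpace ℝ E]
    (D : Fin n → E) (m : E) (hm : ∑ j, D j = (n : ℝ) • m) :
    ∑ j, ‖D j - m‖ ^ 2 ≤ ∑ j, ‖D j‖ ^ 2 := by
  simp only [norm_sub_sq_real, Finset.sum_add_distrib, Finset.sum_sub_distrib, ← Finset.mul_sum,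
    ← sum_inner, hm, inner_smul_left, real_inner_self_eq_norm_sq]
  simp
  nlinarith [mul_nonneg (Nat.cast_nonneg (α := ℝ) n) (sq_nonneg ‖m‖)]

theorem aux_grad {n d : ℕ} (h : Fin n → EuclideanSpace ℝ (Fin d) → ℝ)
    (hdiff : ∀ j, Differentiable ℝ (h j))
    (H : EuclideanSpace ℝ (Fin d) → ℝ)
    (hH : ∀ x, H x = (n : ℝ)⁻¹ * ∑ j, h j x) (x : EuclideanSpace ℝ (Fin d)) :
    gradient H x = (n : ℝ)⁻¹ • ∑ j, gradient (h j) x := by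
  have e : H = fun x => (n : ℝ)⁻¹ * ∑ j, h j x := funext hH
  have h2 : HasFDerivAt H ((n : ℝ)⁻¹ • ∑ j, fderiv ℝ (h j) x) x := by
    rw [e]
    exact (HasFDerivAt.fun_sum fun j _ => (hdiff j x).hasFDerivAt).const_mul _
  simp only [gradient, h2.fderiv, map_smulₛₗ, map_sum]
  simp

theorem statement10 (n d b : ℕ) (hn : 1 ≤ n) (hb : 1 ≤ b) (L : ℝ)
    (h : Fin n → EuclideanSpace ℝ (Fin d) → ℝ)
    (hdiff : ∀ j, Differentiable ℝ (h j))
    (havg : ∀ x x' : EuclideanSpace ℝ (Fin d),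
      (n : ℝ)⁻¹ * ∑ j, ‖gradient (h j) x - gradient (h j) x'‖ ^ 2 ≤ L ^ 2 * ‖x - x'‖ ^ 2)
    (H : EuclideanSpace ℝ (Fin d) → ℝ)
    (hH : ∀ x, H x = (n : ℝ)⁻¹ * ∑ j, h j x)
    (g x x' : EuclideanSpace ℝ (Fin d)) :
    ((n : ℝ) ^ b)⁻¹ * ∑ ξ : Fin b → Fin n,
        ‖g + (b : ℝ)⁻¹ • (∑ k, (gradient (h (ξ k)) x' - gradient (h (ξ k)) x)) - gradient H x'‖ ^ 2
      ≤ ‖g - gradient H x‖ ^ 2 + (L ^ 2 / (b : ℝ)) * ‖x' - x‖ ^ 2 := by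
  have hn0 : (n : ℝ) ≠ 0 := by positivity
  have hb0 : (b : ℝ) ≠ 0 := by positivity
  have hbp : (0 : ℝ) < b := by positivity
  have hnp : (0 : ℝ) < n := by positivity
  have hg := aux_grad h hdiff H hH
  set D : Fin n → EuclideanSpace ℝ (Fin d) := fun j => gradient (h j) x' - gradient (h j) x with hD
  set m := gradient H x' - gradient H x with hmdef
  have hm : ∑ j, D j = (n : ℝ) • m := by
    simp only [hD, hmdef, hg, Finset.sum_sub_distrib, ← smul_sub]
    rw [smul_smul, mul_inv_cancel₀ hn0, one_smul]
  have hu : ∑ j, (b : ℝ)⁻¹ • (D j - m) = 0 := by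
    rw [← Finset.smul_sum, Finset.sum_sub_distrib, hm]
    simp [← Nat.cast_smul_eq_nsmul ℝ]
  have key := aux_sum hn (fun j => (b : ℝ)⁻¹ • (D j - m)) hu b (g - gradient H x)
  have e : ∀ ξ : Fin b → Fin n,
      g + (b : ℝ)⁻¹ • (∑ k, (gradient (h (ξ k)) x' - gradient (h (ξ k)) x)) - gradient H x'
      = (g - gradient H x) + ∑ k, (b : ℝ)⁻¹ • (D (ξ k) - m) := by
    intro ξ
    have : (b : ℝ)⁻¹ • ∑ _k : Fin b, m = m := by
      simp [← Nat.cast_smul_eq_nsmul ℝ, smul_smul, hb0]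
    simp only [← Finset.smul_sum, Finset.sum_sub_distrib, smul_sub, this, hmdef, hD] at this ⊢
    rw [this]
    abel
  simp only [e]
  rw [key, inv_mul_cancel_left₀ (pow_ne_zero _ hn0)]
  have hv := aux_var hn D m hm
  have ha := havg x' x
  have e2 : (b : ℝ) * ((n : ℝ)⁻¹ * ∑ j, ‖(b : ℝ)⁻¹ • (D j - m)‖ ^ 2)
      = (b : ℝ)⁻¹ * ((n : ℝ)⁻¹ * ∑ j, ‖D j - m‖ ^ 2) := by
    simp only [norm_smul, mul_pow, ← Finset.mul_sum]
    simp
    field_simp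
  rw [e2]
  have : (b : ℝ)⁻¹ * ((n : ℝ)⁻¹ * ∑ j, ‖D j - m‖ ^ 2) ≤ (b : ℝ)⁻¹ * (L ^ 2 * ‖x' - x‖ ^ 2) := by
    refine mul_le_mul_of_nonneg_left (le_trans ?_ ha) (by positivity)
    exact mul_le_mul_of_nonneg_left hv (by positivity)
  have e3 : (b : ℝ)⁻¹ * (L ^ 2 * ‖x' - x‖ ^ 2) = L ^ 2 / b * ‖x' - x‖ ^ 2 := by ring
  linarith
end
end

section
/- Let L > 0, η = 1/(2L), and let m, n, b be positive integers with m b² ≥ 36 n; set p = b/(b+n). Let 0 ≤ ρ ≤ ρ̂ be reals with 296 ρ̂² ≤ 1 and 4 m p ρ² ≤ 1. Suppose the real numbers F, F⁺ and the nonnegative real numbers U, U⁺, V, V⁺, C, C⁺, G, D satisfy: (A) F⁺ ≤ F − (η/2)G + ηU + (L²η/m)C − (1/(2η) − L/2)D; (B) U⁺ ≤ (1−p)U + (9(1−p)L²/(m²b))C + (3(1−p)L²/(mb))D; (C) V⁺ ≤ (1−p)V + (9(1−p)L²/(mb))C + (3(1−p)L²/b)D; (D) C⁺ ≤ (1/4)C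 + 4ρ²pη²mV + 6(ρ̂²(1−p)/b + 2ρ²p)mD. Then the Lyapunov quantity Φ = F + (η/p)U + (η/(mp))V + (1/(mη))C decreases: F⁺ + (η/p)U⁺ + (η/(mp))V⁺ + (1/(mη))C⁺ ≤ Φ − (η/2)G − (3/(8mη))C. -/
theorem statement14 (L η : ℝ) (hL : 0 < L) (hη : η = 1 / (2 * L))
    (m n b : ℕ) (hm : 1 ≤ m) (hn : 1 ≤ n) (hb : 1 ≤ b)
    (hmb : 36 * n ≤ m * b ^ 2)
    (p : ℝ) (hp : p = (b : ℝ) / ((b : ℝ) + (n : ℝ)))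
    (rho rhoh : ℝ) (hrho0 : 0 ≤ rho) (hrhole : rho ≤ rhoh)
    (h296 : 296 * rhoh ^ 2 ≤ 1) (h4 : 4 * (m : ℝ) * p * rho ^ 2 ≤ 1)
    (F Fp U Up V Vp C Cp G D : ℝ)
    (hU : 0 ≤ U) (hUp : 0 ≤ Up) (hV : 0 ≤ V) (hVp : 0 ≤ Vp)
    (hC : 0 ≤ C) (hCp : 0 ≤ Cp) (hG : 0 ≤ G) (hD : 0 ≤ D)
    (hA : Fp ≤ F - (η / 2) * G + η * U + (L ^ 2 * η / (m : ℝ)) * C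
      - (1 / (2 * η) - L / 2) * D)
    (hB : Up ≤ (1 - p) * U + (9 * (1 - p) * L ^ 2 / ((m : ℝ) ^ 2 * (b : ℝ))) * C
      + (3 * (1 - p) * L ^ 2 / ((m : ℝ) * (b : ℝ))) * D)
    (hCrec : Vp ≤ (1 - p) * V + (9 * (1 - p) * L ^ 2 / ((m : ℝ) * (b : ℝ))) * C
      + (3 * (1 - p) * L ^ 2 / (b : ℝ)) * D)
    (hDrec : Cp ≤ (1 / 4) * C + 4 * rho ^ 2 * p * η ^ 2 * (m : ℝ) * V
      + 6 * (rhoh ^ 2 * (1 - p) / (b : ℝ) + 2 * rho ^ 2 * p) * (m : ℝ) * D) :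
    Fp + (η / p) * Up + (η / ((m : ℝ) * p)) * Vp + (1 / ((m : ℝ) * η)) * Cp
      ≤ (F + (η / p) * U + (η / ((m : ℝ) * p)) * V + (1 / ((m : ℝ) * η)) * C)
        - (η / 2) * G - (3 / (8 * (m : ℝ) * η)) * C := by
  have hm' : (1:ℝ) ≤ m := by exact_mod_cast hm
  have hn' : (1:ℝ) ≤ n := by exact_mod_cast hn
  have hb' : (1:ℝ) ≤ b := by exact_mod_cast hb
  have hmb' : 36 * (n:ℝ) ≤ m * (b:ℝ) ^ 2 := by exact_mod_cast hmb
  generalize (m:ℝ) = M at *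
  generalize (n:ℝ) = N at *
  generalize (b:ℝ) = B at *
  have hM0 : 0 < M := by linarith
  have hN0 : 0 < N := by linarith
  have hB0 : 0 < B := by linarith
  have hp0 : 0 < p := by rw [hp]; positivity
  have hp1 : p ≤ 1 := by rw [hp, div_le_one (by linarith)]; linarith
  have hη0 : 0 < η := by rw [hη]; positivity
  obtain ⟨k, hk⟩ : ∃ k, k = N / (M * B ^ 2) := ⟨_, rfl⟩
  have hk1 : k ≤ 1 / 36 := by
    rw [hk, div_le_div_iff₀ (by positivity) (by norm_num)]; linarith
  have eB : (η / p) * ((1 - p) * U + (9 * (1 - p) * L ^ 2 / (M ^ 2 * B)) * C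
      + (3 * (1 - p) * L ^ 2 / (M * B)) * D)
      = (η / p) * U - η * U + 9 / 2 * L * k * (C / M) + 3 / 2 * L * k * D := by
    rw [hk, hη, hp]; field_simp; ring
  have eC : (η / (M * p)) * ((1 - p) * V + (9 * (1 - p) * L ^ 2 / (M * B)) * C
      + (3 * (1 - p) * L ^ 2 / B) * D)
      = (η / (M * p)) * V - η / M * V + 9 / 2 * L * k * (C / M) + 3 / 2 * L * k * D := by
    rw [hk, hη, hp]; field_simp; ring
  have eD : (1 / (M * η)) * ((1 / 4) * C + 4 * rho ^ 2 * p * η ^ 2 * M * V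
      + 6 * (rhoh ^ 2 * (1 - p) / B + 2 * rho ^ 2 * p) * M * D)
      = L / 2 * (C / M) + (4 * M * p * rho ^ 2) * (η / M * V)
        + 12 * (rhoh ^ 2 * (1 - p) / B + 2 * rho ^ 2 * p) * (L * D) := by
    rw [hη]; field_simp; ring
  have eA1 : (L ^ 2 * η / M) * C = L / 2 * (C / M) := by rw [hη]; field_simp
  have eA2 : (1 / (2 * η) - L / 2) * D = 1 / 2 * (L * D) := by rw [hη]; field_simp; ring
  have eG : (1 / (M * η)) * C = 2 * L * (C / M) := by rw [hη]; field_simp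
  have eH : (3 / (8 * M * η)) * C = 3 / 4 * L * (C / M) := by rw [hη]; field_simp; ring
  have iB := mul_le_mul_of_nonneg_left hB (show 0 ≤ η / p by positivity)
  have iC := mul_le_mul_of_nonneg_left hCrec (show 0 ≤ η / (M * p) by positivity)
  have iD := mul_le_mul_of_nonneg_left hDrec (show 0 ≤ 1 / (M * η) by positivity)
  rw [eB] at iB
  rw [eC] at iC
  rw [eD] at iD
  rw [eA1, eA2] at hA
  rw [eG, eH]
  have j1 : (4 * M * p * rho ^ 2) * (η / M * V) ≤ 1 * (η / M * V) :=
    mul_le_mul_of_nonneg_right h4 (by positivity)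
  have j2 : k * (L * (C / M)) ≤ 1 / 36 * (L * (C / M)) :=
    mul_le_mul_of_nonneg_right hk1 (by positivity)
  have j3 : k * (L * D) ≤ 1 / 36 * (L * D) :=
    mul_le_mul_of_nonneg_right hk1 (by positivity)
  have r0 : rho ^ 2 ≤ rhoh ^ 2 := pow_le_pow_left₀ hrho0 hrhole 2
  have r1 : rhoh ^ 2 * (1 - p) / B ≤ rhoh ^ 2 * (1 - p) :=
    div_le_self (mul_nonneg (sq_nonneg _) (by linarith)) hb'
  have r2 : rho ^ 2 * p ≤ rhoh ^ 2 * p := mul_le_mul_of_nonneg_right r0 hp0.le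
  have r3 : rhoh ^ 2 * p ≤ rhoh ^ 2 * 1 := mul_le_mul_of_nonneg_left hp1 (sq_nonneg _)
  have r4 : 12 * (rhoh ^ 2 * (1 - p) / B + 2 * rho ^ 2 * p) ≤ 5 / 12 := by linarith
  have j4 := mul_le_mul_of_nonneg_right r4 (show 0 ≤ L * D by positivity)
  linarith
end

section
/- (Deterministic core of the main theorem.) Let f_1,…,f_m : ℝ^d → ℝ be differentiable with each ∇f_i being L-Lipschitz continuous, set f = (1/m)Σ_i f_i, and assume f(x) ≥ f* for all x. Let ε > 0, η = 1/(2L), let m, n, b, T be positive integers with m b² ≥ 36 n and T ≥ 16L(f(x̄₀) − f*)/ε², set p = b/(b+n), and let 0 ≤ ρ ≤ ρ̂ with 296ρ̂² ≤ 1 and 4mpρ² ≤ 1. Let x₀,…,x_T ∈ ℝ^{m×d}, and let U_t, V_t, C_t ≥ 0 (t = 0,…,T) satisfy C_t ≥ ‖x_t − 𝟙x̄_tᵀ‖², U₀ = V₀ = 0, C₀ ≤ mη²ε²/8, and for every 0 ≤ t < T, with F_t = f(x̄_t), G_t = ‖∇f(x̄_t)‖², D_t = ‖x̄_{t+1} −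 x̄_t‖²: (A) F_{t+1} ≤ F_t − (η/2)G_t + ηU_t + (L²η/m)C_t − (1/(2η) − L/2)D_t; (B) U_{t+1} ≤ (1−p)U_t + (9(1−p)L²/(m²b))C_t + (3(1−p)L²/(mb))D_t; (C) V_{t+1} ≤ (1−p)V_t + (9(1−p)L²/(mb))C_t + (3(1−p)L²/b)D_t; (D) C_{t+1} ≤ (1/4)C_t + 4ρ²pη²mV_t + 6(ρ̂²(1−p)/b + 2ρ²p)mD_t. Then (1/(mT)) Σ_{t=0}^{T−1} Σ_{i=1}^m ‖∇f(x_t(i))‖² ≤ ε². -/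
open scoped BigOperators

noncomputable section

theorem aux_grad_s16 {m d : ℕ} (L : ℝ) (hm : 1 ≤ m)
    (fi : Fin m → EuclideanSpace ℝ (Fin d) → ℝ)
    (hdiff : ∀ i, Differentiable ℝ (fi i))
    (hLip : ∀ i, ∀ y y' : EuclideanSpace ℝ (Fin d),
      ‖gradient (fi i) y - gradient (fi i) y'‖ ≤ L * ‖y - y'‖)
    (f : EuclideanSpace ℝ (Fin d) → ℝ)
    (hf : ∀ y, f y = (m : ℝ)⁻¹ * ∑ i, fi i y) (y y' : EuclideanSpace ℝ (Fin d)) :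
    ‖gradient f y - gradient f y'‖ ≤ L * ‖y - y'‖ := by
  have hm0 : (0 : ℝ) < m := by exact_mod_cast hm
  have key : ∀ z, gradient f z = (m : ℝ)⁻¹ • ∑ i, gradient (fi i) z := by
    intro z
    have h1 : HasFDerivAt f ((m : ℝ)⁻¹ • ∑ i, fderiv ℝ (fi i) z) z := by
      have h2 : HasFDerivAt (fun y => ∑ i, fi i y) (∑ i, fderiv ℝ (fi i) z) z :=
        HasFDerivAt.fun_sum (fun i _ => (hdiff i z).hasFDerivAt)
      have h3 := h2.const_mul ((m : ℝ)⁻¹)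
      have : f = fun y => (m : ℝ)⁻¹ * ∑ i, fi i y := funext hf
      rw [this]
      exact h3
    unfold gradient
    rw [h1.fderiv]
    simp
  rw [key, key, ← smul_sub, ← Finset.sum_sub_distrib, norm_smul]
  have h1 : ‖∑ i, (gradient (fi i) y - gradient (fi i) y')‖ ≤ m * (L * ‖y - y'‖) := by
    refine (norm_sum_le _ _).trans ?_
    refine (Finset.sum_le_sum (fun i _ => hLip i y y')).trans ?_
    simp
  rw [Real.norm_of_nonneg (by positivity)]
  calc (m : ℝ)⁻¹ * _ ≤ (m : ℝ)⁻¹ * (m * (L * ‖y - y'‖)) := by gcongr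
    _ = _ := by field_simp

theorem aux_sum_s16 (T : ℕ) (X C D : ℕ → ℝ) (q a c : ℝ) (hX : 0 ≤ X T)
    (h : ∀ t < T, X (t + 1) ≤ q * X t + a * C t + c * D t) :
    (1 - q) * ∑ t ∈ Finset.range T, X t ≤ X 0 + a * ∑ t ∈ Finset.range T, C t
      + c * ∑ t ∈ Finset.range T, D t := by
  have h1 := Finset.sum_le_sum (fun t ht => h t (Finset.mem_range.1 ht))
  rw [Finset.sum_add_distrib, Finset.sum_add_distrib, ← Finset.mul_sum, ← Finset.mul_sum,
    ← Finset.mul_sum] at h1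
  have h2 := Finset.sum_range_succ X T
  rw [Finset.sum_range_succ'] at h2
  linarith

theorem aux_local {m d : ℕ} (L : ℝ) (hL : 0 < L)
    (g : EuclideanSpace ℝ (Fin d) → EuclideanSpace ℝ (Fin d))
    (hg : ∀ y y', ‖g y - g y'‖ ≤ L * ‖y - y'‖)
    (x : Fin m → EuclideanSpace ℝ (Fin d)) (z : EuclideanSpace ℝ (Fin d)) (c : ℝ)
    (hc : fnorm (x - fun _ => z) ^ 2 ≤ c) :
    ∑ i, ‖g (x i)‖ ^ 2 ≤ 2 * L ^ 2 * c + 2 * m * ‖g z‖ ^ 2 := by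
  unfold fnorm at hc
  rw [Real.sq_sqrt (by positivity)] at hc
  simp only [Pi.sub_apply] at hc
  have h1 : ∀ i, ‖g (x i)‖ ^ 2 ≤ 2 * L ^ 2 * ‖x i - z‖ ^ 2 + 2 * ‖g z‖ ^ 2 := by
    intro i
    have h2 := hg (x i) z
    have h3 : ‖g (x i)‖ ≤ ‖g (x i) - g z‖ + ‖g z‖ := by
      simpa using norm_add_le (g (x i) - g z) (g z)
    have h4 : ‖g (x i)‖ ≤ L * ‖x i - z‖ + ‖g z‖ := by linarith
    have h5 : ‖g (x i)‖ ^ 2 ≤ (L * ‖x i - z‖ + ‖g z‖) ^ 2 := by gcongr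
    nlinarith [sq_nonneg (L * ‖x i - z‖ - ‖g z‖)]
  refine (Finset.sum_le_sum (fun i _ => h1 i)).trans ?_
  rw [Finset.sum_add_distrib, ← Finset.mul_sum]
  simp only [Finset.sum_const, Finset.card_univ, Fintype.card_fin, nsmul_eq_mul]
  have : 2 * L ^ 2 * ∑ i, ‖x i - z‖ ^ 2 ≤ 2 * L ^ 2 * c := by gcongr
  linarith

set_option maxHeartbeats 1000000 in
theorem statement16 (m n d b T : ℕ) (hm : 1 ≤ m) (hn : 1 ≤ n) (hb : 1 ≤ b) (hT : 1 ≤ T)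
    (L ε : ℝ) (hL : 0 < L) (hε : 0 < ε)
    (η : ℝ) (hη : η = 1 / (2 * L))
    (fi : Fin m → EuclideanSpace ℝ (Fin d) → ℝ)
    (hdiff : ∀ i, Differentiable ℝ (fi i))
    (hLip : ∀ i, ∀ y y' : EuclideanSpace ℝ (Fin d),
      ‖gradient (fi i) y - gradient (fi i) y'‖ ≤ L * ‖y - y'‖)
    (f : EuclideanSpace ℝ (Fin d) → ℝ)
    (hf : ∀ y, f y = (m : ℝ)⁻¹ * ∑ i, fi i y)
    (fstar : ℝ) (hlb : ∀ y, fstar ≤ f y)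
    (x : ℕ → Fin m → EuclideanSpace ℝ (Fin d))
    (hmb : 36 * n ≤ m * b ^ 2)
    (hTbig : 16 * L * (f (rowAvg (x 0)) - fstar) / ε ^ 2 ≤ (T : ℝ))
    (p : ℝ) (hp : p = (b : ℝ) / ((b : ℝ) + (n : ℝ)))
    (rho rhoh : ℝ) (hrho0 : 0 ≤ rho) (hrhole : rho ≤ rhoh)
    (h296 : 296 * rhoh ^ 2 ≤ 1) (h4 : 4 * (m : ℝ) * p * rho ^ 2 ≤ 1)
    (U V C : ℕ → ℝ)
    (hUnn : ∀ t ≤ T, 0 ≤ U t) (hVnn : ∀ t ≤ T, 0 ≤ V t) (hCnn : ∀ t ≤ T, 0 ≤ C t)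
    (hCge : ∀ t ≤ T, fnorm (x t - fun _ => rowAvg (x t)) ^ 2 ≤ C t)
    (hU0 : U 0 = 0) (hV0 : V 0 = 0)
    (hC0 : C 0 ≤ (m : ℝ) * η ^ 2 * ε ^ 2 / 8)
    (hA : ∀ t < T, f (rowAvg (x (t + 1))) ≤ f (rowAvg (x t))
      - (η / 2) * ‖gradient f (rowAvg (x t))‖ ^ 2 + η * U t + (L ^ 2 * η / (m : ℝ)) * C t
      - (1 / (2 * η) - L / 2) * ‖rowAvg (x (t + 1)) - rowAvg (x t)‖ ^ 2)
    (hB : ∀ t < T, U (t + 1) ≤ (1 - p) * U t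
      + (9 * (1 - p) * L ^ 2 / ((m : ℝ) ^ 2 * (b : ℝ))) * C t
      + (3 * (1 - p) * L ^ 2 / ((m : ℝ) * (b : ℝ))) * ‖rowAvg (x (t + 1)) - rowAvg (x t)‖ ^ 2)
    (hCrec : ∀ t < T, V (t + 1) ≤ (1 - p) * V t
      + (9 * (1 - p) * L ^ 2 / ((m : ℝ) * (b : ℝ))) * C t
      + (3 * (1 - p) * L ^ 2 / (b : ℝ)) * ‖rowAvg (x (t + 1)) - rowAvg (x t)‖ ^ 2)
    (hDrec : ∀ t < T, C (t + 1) ≤ (1 / 4) * C t + 4 * rho ^ 2 * p * η ^ 2 * (m : ℝ) * V t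
      + 6 * (rhoh ^ 2 * (1 - p) / (b : ℝ) + 2 * rho ^ 2 * p) * (m : ℝ) *
          ‖rowAvg (x (t + 1)) - rowAvg (x t)‖ ^ 2) :
    ((m : ℝ) * (T : ℝ))⁻¹ * ∑ t ∈ Finset.range T, ∑ i, ‖gradient f (x t i)‖ ^ 2 ≤ ε ^ 2 := by
  have hg := aux_grad_s16 L hm fi hdiff hLip f hf
  have hm0 : (0 : ℝ) < m := by exact_mod_cast hm
  have hm1 : (1 : ℝ) ≤ m := by exact_mod_cast hm
  have hn0 : (0 : ℝ) < n := by exact_mod_cast hn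
  have hb0 : (0 : ℝ) < b := by exact_mod_cast hb
  have hb1 : (1 : ℝ) ≤ b := by exact_mod_cast hb
  have hT1 : (1 : ℝ) ≤ T := by exact_mod_cast hT
  have hmb' : 36 * (n : ℝ) ≤ m * (b : ℝ) ^ 2 := by exact_mod_cast hmb
  have hp0 : 0 < p := by rw [hp]; positivity
  have hp1 : p < 1 := by rw [hp, div_lt_one (by positivity)]; linarith
  have hq : 1 - p = p * (n / b) := by rw [hp]; field_simp; ring
  -- sums
  set D : ℕ → ℝ := fun t => ‖rowAvg (x (t + 1)) - rowAvg (x t)‖ ^ 2 with hDdef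
  set G : ℕ → ℝ := fun t => ‖gradient f (rowAvg (x t))‖ ^ 2 with hGdef
  set F : ℕ → ℝ := fun t => f (rowAvg (x t)) with hFdef
  have sB := aux_sum_s16 T U C D _ _ _ (hUnn T le_rfl) hB
  have sV := aux_sum_s16 T V C D _ _ _ (hVnn T le_rfl) hCrec
  have sC := aux_sum_s16 T C V D _ _ _ (hCnn T le_rfl) hDrec
  have sA : F T ≤ F 0 - (η / 2) * ∑ t ∈ Finset.range T, G t + η * ∑ t ∈ Finset.range T, U t
      + (L ^ 2 * η / (m : ℝ)) * ∑ t ∈ Finset.range T, C t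
      - (1 / (2 * η) - L / 2) * ∑ t ∈ Finset.range T, D t := by
    have h1 : ∑ t ∈ Finset.range T, (F (t + 1) - F t) ≤ ∑ t ∈ Finset.range T,
        (- (η / 2) * G t + η * U t + (L ^ 2 * η / (m : ℝ)) * C t
          - (1 / (2 * η) - L / 2) * D t) := by
      refine Finset.sum_le_sum (fun t ht => ?_)
      have := hA t (Finset.mem_range.1 ht)
      simp only [hDdef, hGdef, hFdef]
      linarith
    rw [Finset.sum_range_sub, Finset.sum_sub_distrib, Finset.sum_add_distrib,
      Finset.sum_add_distrib, ← Finset.mul_sum, ← Finset.mul_sum, ← Finset.mul_sum,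
      ← Finset.mul_sum] at h1
    linarith
  have sG : ∑ t ∈ Finset.range T, ∑ i, ‖gradient f (x t i)‖ ^ 2
      ≤ 2 * L ^ 2 * ∑ t ∈ Finset.range T, C t + 2 * m * ∑ t ∈ Finset.range T, G t := by
    rw [Finset.mul_sum, Finset.mul_sum, ← Finset.sum_add_distrib]
    exact Finset.sum_le_sum (fun t ht => aux_local L hL (gradient f) hg (x t) (rowAvg (x t)) (C t)
      (hCge t (Finset.mem_range.1 ht).le))
  have hSC : 0 ≤ ∑ t ∈ Finset.range T, C t :=
    Finset.sum_nonneg (fun t ht => hCnn t (Finset.mem_range.1 ht).le)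
  have hSV : 0 ≤ ∑ t ∈ Finset.range T, V t :=
    Finset.sum_nonneg (fun t ht => hVnn t (Finset.mem_range.1 ht).le)
  have hSD : 0 ≤ ∑ t ∈ Finset.range T, D t :=
    Finset.sum_nonneg (fun t ht => by positivity)
  have hFT : fstar ≤ F T := hlb _
  have hΔ : 16 * L * (F 0 - fstar) ≤ T * ε ^ 2 := by
    rwa [div_le_iff₀ (by positivity)] at hTbig
  generalize (∑ t ∈ Finset.range T, ∑ i, ‖gradient f (x t i)‖ ^ 2) = S at *
  generalize (∑ t ∈ Finset.range T, C t) = SC at *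
  generalize (∑ t ∈ Finset.range T, V t) = SV at *
  generalize (∑ t ∈ Finset.range T, U t) = SU at *
  generalize (∑ t ∈ Finset.range T, D t) = SD at *
  generalize (∑ t ∈ Finset.range T, G t) = SG at *
  have hr : (n : ℝ) / (m * b ^ 2) ≤ 1 / 36 := by
    rw [div_le_iff₀ (by positivity)]; linarith
  have bU : SU ≤ L ^ 2 / (4 * m) * SC + L ^ 2 / 12 * SD := by
    rw [hU0] at sB
    have e : p * SU ≤ p * (9 * L ^ 2 / m * SC * (n / (m * b ^ 2))
        + 3 * L ^ 2 * SD * (n / (m * b ^ 2))) := by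
      calc p * SU ≤ 9 * (1 - p) * L ^ 2 / (↑m ^ 2 * ↑b) * SC + 3 * (1 - p) * L ^ 2 / (↑m * ↑b) * SD := by linarith only [sB]
        _ = _ := by rw [hq]; field_simp
    have e1 := le_of_mul_le_mul_left e hp0
    have e2 : 9 * L ^ 2 / m * SC * (n / (m * b ^ 2)) ≤ 9 * L ^ 2 / m * SC * (1 / 36) := by gcongr
    have e3 : 3 * L ^ 2 * SD * (n / (m * b ^ 2)) ≤ 3 * L ^ 2 * SD * (1 / 36) := by gcongr
    calc SU ≤ 9 * L ^ 2 / m * SC * (1 / 36) + 3 * L ^ 2 * SD * (1 / 36) := by linarith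
      _ = _ := by field_simp; ring
  have bV : SV ≤ L ^ 2 / 4 * SC + m * L ^ 2 / 12 * SD := by
    rw [hV0] at sV
    have e : p * SV ≤ p * (9 * L ^ 2 * SC * (n / (m * b ^ 2))
        + 3 * L ^ 2 * m * SD * (n / (m * b ^ 2))) := by
      calc p * SV ≤ 9 * (1 - p) * L ^ 2 / (↑m * ↑b) * SC + 3 * (1 - p) * L ^ 2 / ↑b * SD := by linarith only [sV]
        _ = _ := by rw [hq]; field_simp
    have e1 := le_of_mul_le_mul_left e hp0
    have e2 : 9 * L ^ 2 * SC * (n / (m * b ^ 2)) ≤ 9 * L ^ 2 * SC * (1 / 36) := by gcongr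
    have e3 : 3 * L ^ 2 * m * SD * (n / (m * b ^ 2)) ≤ 3 * L ^ 2 * m * SD * (1 / 36) := by gcongr
    linarith only [e1, e2, e3]
  have hη2 : η ^ 2 = 1 / (4 * L ^ 2) := by rw [hη]; field_simp; norm_num
  have bC : 11 / 16 * SC ≤ m * η ^ 2 * ε ^ 2 / 8 + m * (1 / 12) * SD := by
    have c1 : 4 * rho ^ 2 * p * η ^ 2 * (m : ℝ) * SV ≤ 1 / 16 * SC + m / 48 * SD := by
      calc 4 * rho ^ 2 * p * η ^ 2 * (m : ℝ) * SV = (4 * m * p * rho ^ 2) * (η ^ 2 * SV) := by ring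
        _ ≤ 1 * (η ^ 2 * SV) := by gcongr
        _ ≤ 1 * (η ^ 2 * (L ^ 2 / 4 * SC + m * L ^ 2 / 12 * SD)) := by gcongr
        _ = _ := by rw [hη2]; field_simp; ring
    have c2 : rho ^ 2 ≤ rhoh ^ 2 := by gcongr
    have c3 : rhoh ^ 2 * (1 - p) / b ≤ 1 / 296 := by
      rw [div_le_iff₀ hb0]
      have := mul_nonneg (sq_nonneg rhoh) hp0.le
      linarith only [this, h296, hb1]
    have c4 : rho ^ 2 * p ≤ 1 / 296 := by
      have := mul_le_mul_of_nonneg_left hp1.le (sq_nonneg rho)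
      linarith only [this, c2, h296]
    have c5 : 6 * (rhoh ^ 2 * (1 - p) / (b : ℝ) + 2 * rho ^ 2 * p) * (m : ℝ) * SD
        ≤ 6 * (3 / 296) * m * SD := by
      gcongr
      linarith only [c3, c4]
    have : 0 ≤ m * SD := by positivity
    linarith only [this, c1, c5, sC, hC0]
  have hηL : η * L = 1 / 2 := by rw [hη]; field_simp
  have hinv : 1 / (2 * η) = L := by rw [hη]; field_simp
  rw [hinv] at sA
  have hη0 : 0 < η := by rw [hη]; positivity
  have a1 : SG ≤ 4 * L * (F 0 - fstar) + 2 * (L ^ 2 / (4 * m) * SC + L ^ 2 / 12 * SD)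
      + 2 * L ^ 2 / m * SC - 2 * L ^ 2 * SD := by
    have : (η / 2) * SG ≤ (η / 2) * (4 * L * (F 0 - fstar)
        + 2 * (L ^ 2 / (4 * m) * SC + L ^ 2 / 12 * SD) + 2 * L ^ 2 / m * SC - 2 * L ^ 2 * SD) := by
      have e1 : η * SU ≤ η * (L ^ 2 / (4 * m) * SC + L ^ 2 / 12 * SD) := by gcongr
      have e2 : (η / 2) * (4 * L * (F 0 - fstar)) = F 0 - fstar := by
        linear_combination 2 * (F 0 - fstar) * hηL
      have e3 : (η / 2) * (2 * L ^ 2 * SD) = (L - L / 2) * SD := by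
        linear_combination L * SD * hηL
      have e4 : (η / 2) * (2 * L ^ 2 / m * SC) = L ^ 2 * η / m * SC := by ring
      linarith only [e1, e2, e3, e4, sA, hFT]
    exact le_of_mul_le_mul_left this (by positivity)
  have a2 : m * SG ≤ m * (4 * L * (F 0 - fstar)) + 5 / 2 * (L ^ 2 * SC)
      - 11 / 6 * (m * L ^ 2 * SD) := by
    calc m * SG ≤ _ := mul_le_mul_of_nonneg_left a1 hm0.le
      _ = _ := by field_simp; ring
  have a3 : 11 / 16 * (L ^ 2 * SC) ≤ m * ε ^ 2 / 32 + 1 / 12 * (m * L ^ 2 * SD) := by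
    calc 11 / 16 * (L ^ 2 * SC) = L ^ 2 * (11 / 16 * SC) := by ring
      _ ≤ _ := mul_le_mul_of_nonneg_left bC (by positivity)
      _ = _ := by rw [hη2]; field_simp; ring
  have a4 : m * (16 * L * (F 0 - fstar)) ≤ m * (T * ε ^ 2) := by gcongr
  have a5 : m * (1 * ε ^ 2) ≤ m * (T * ε ^ 2) := by gcongr
  have a6 : 0 ≤ m * L ^ 2 * SD := by positivity
  have a7 : 0 ≤ m * ε ^ 2 := by positivity
  rw [inv_mul_le_iff₀ (by positivity)]
  linarith only [a2, a3, a4, a5, a6, a7, sG]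
end
end
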